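/- For a bounded double complex of complex vector spaces, the following are equivalent: (i) the ∂∂̄-lemma holds; (ii) the natural map H_BC^{p,q} → H_A^{p,q} induced by the identity is injective for every (p,q). Moreover, when these hold, all the natural identity-induced maps H_BC^{p,q} → H_∂̄^{p,q}, H_BC^{p,q} → H_∂^{p,q}, H_∂̄^{p,q} → H_A^{p,q}, H_∂^{p,q} → H_A^{p,q} are isomorphisms, and the natural map ⊕_{p+q=k} H_BC^{p,q} → H_dR^k is an isomorphism for every k. -/

import Mathlib

open Submodule

/-- A double complex of complex vector spaces, presented as a bigraded direct-sum
decomposition `K p q` of an ambient space `V`, together with anticommuting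
differentials `d1 = ∂` (of bidegree `(1,0)`) and `d2 = ∂̄` (of bidegree `(0,1)`). -/
structure DoubleComplex (V : Type*) [AddCommGroup V] [Module ℂ V] where
  K : ℤ → ℤ → Submodule ℂ V
  isInternal : DirectSum.IsInternal fun pq : ℤ × ℤ => K pq.1 pq.2
  d1 : V →ₗ[ℂ] V
  d2 : V →ₗ[ℂ] V
  d1_mem : ∀ p q : ℤ, ∀ x ∈ K p q, d1 x ∈ K (p + 1) q
  d2_mem : ∀ p q : ℤ, ∀ x ∈ K p q, d2 x ∈ K p (q + 1)
  d1_d1 : d1 ∘ₗ d1 = 0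
  d2_d2 : d2 ∘ₗ d2 = 0
  anticomm : d1 ∘ₗ d2 + d2 ∘ₗ d1 = 0

/-- The dimension (as a natural number) of the quotient of a submodule `M` of `V`
by (the trace on `M` of) a submodule `N`. -/
noncomputable def qdim {V : Type*} [AddCommGroup V] [Module ℂ V]
    (M N : Submodule ℂ V) : ℕ :=
  Module.finrank ℂ (↥M ⧸ N.comap M.subtype)

/-- The linear map between quotients `M₁/N₁ → M₂/N₂` induced by the identity,
for `M₁ ≤ M₂` and `N₁ ≤ N₂`. -/
def quotMap {V : Type*} [AddCommGroup V] [Module ℂ V] {M₁ N₁ M₂ N₂ : Submodule ℂ V}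
    (hM : M₁ ≤ M₂) (hN : N₁ ≤ N₂) :
    (↥M₁ ⧸ N₁.comap M₁.subtype) →ₗ[ℂ] (↥M₂ ⧸ N₂.comap M₂.subtype) :=
  Submodule.mapQ _ _ (Submodule.inclusion hM) fun _ hx => hN hx

namespace DoubleComplex

variable {V : Type*} [AddCommGroup V] [Module ℂ V] (D : DoubleComplex V)

/-- A double complex is bounded if only finitely many components are non-zero. -/
def Bounded : Prop := Set.Finite {pq : ℤ × ℤ | D.K pq.1 pq.2 ≠ ⊥}

lemma d1_d1_apply (x : V) : D.d1 (D.d1 x) = 0 := by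
  simpa using LinearMap.ext_iff.mp D.d1_d1 x

lemma d2_d2_apply (x : V) : D.d2 (D.d2 x) = 0 := by
  simpa using LinearMap.ext_iff.mp D.d2_d2 x

lemma anticomm_apply (x : V) : D.d1 (D.d2 x) + D.d2 (D.d1 x) = 0 := by
  simpa using LinearMap.ext_iff.mp D.anticomm x

/-- Numerator `ker ∂̄ ∩ K^{p,q}` of the Dolbeault cohomology. -/
def dolN (p q : ℤ) : Submodule ℂ V := LinearMap.ker D.d2 ⊓ D.K p q
/-- Denominator `∂̄ K^{p,q-1}` of the Dolbeault cohomology. -/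
def dolD (p q : ℤ) : Submodule ℂ V := (D.K p (q - 1)).map D.d2
/-- Numerator `ker ∂ ∩ K^{p,q}` of the conjugate Dolbeault cohomology. -/
def conjN (p q : ℤ) : Submodule ℂ V := LinearMap.ker D.d1 ⊓ D.K p q
/-- Denominator `∂ K^{p-1,q}` of the conjugate Dolbeault cohomology. -/
def conjD (p q : ℤ) : Submodule ℂ V := (D.K (p - 1) q).map D.d1
/-- Numerator `ker ∂ ∩ ker ∂̄ ∩ K^{p,q}` of the Bott-Chern cohomology. -/
def bcN (p q : ℤ) : Submodule ℂ V := LinearMap.ker D.d1 ⊓ LinearMap.ker D.d2 ⊓ D.K p q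
/-- Denominator `∂∂̄ K^{p-1,q-1}` of the Bott-Chern cohomology. -/
def bcD (p q : ℤ) : Submodule ℂ V := (D.K (p - 1) (q - 1)).map (D.d1 ∘ₗ D.d2)
/-- Numerator `ker ∂∂̄ ∩ K^{p,q}` of the Aeppli cohomology. -/
def aeN (p q : ℤ) : Submodule ℂ V := LinearMap.ker (D.d1 ∘ₗ D.d2) ⊓ D.K p q
/-- Denominator `∂ K^{p-1,q} + ∂̄ K^{p,q-1}` of the Aeppli cohomology. -/
def aeD (p q : ℤ) : Submodule ℂ V := (D.K (p - 1) q).map D.d1 ⊔ (D.K p (q - 1)).map D.d2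

/-- The degree-`k` part `Tot^k = ⊕_{p+q=k} K^{p,q}` of the total complex. -/
def Tot (k : ℤ) : Submodule ℂ V := ⨆ p : ℤ, D.K p (k - p)
/-- The total differential `d = ∂ + ∂̄`. -/
def dT : V →ₗ[ℂ] V := D.d1 + D.d2
/-- Numerator `ker d ∩ Tot^k` of the de Rham cohomology of the total complex. -/
def dRN (k : ℤ) : Submodule ℂ V := LinearMap.ker D.dT ⊓ D.Tot k
/-- Denominator `d (Tot^{k-1})` of the de Rham cohomology of the total complex. -/
def dRD (k : ℤ) : Submodule ℂ V := (D.Tot (k - 1)).map D.dT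

/-- Hodge number `h_∂̄^{p,q}`. -/
noncomputable def hDol (p q : ℤ) : ℕ := qdim (D.dolN p q) (D.dolD p q)
/-- Conjugate Hodge number `h_∂^{p,q}`. -/
noncomputable def hConj (p q : ℤ) : ℕ := qdim (D.conjN p q) (D.conjD p q)
/-- Bott-Chern number `h_BC^{p,q}`. -/
noncomputable def hBC (p q : ℤ) : ℕ := qdim (D.bcN p q) (D.bcD p q)
/-- Aeppli number `h_A^{p,q}`. -/
noncomputable def hAe (p q : ℤ) : ℕ := qdim (D.aeN p q) (D.aeD p q)
/-- Betti number `b_k` of the total complex. -/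
noncomputable def b (k : ℤ) : ℕ := qdim (D.dRN k) (D.dRD k)

/-- The `∂∂̄`-lemma property:
`ker ∂ ∩ ker ∂̄ ∩ (im ∂ + im ∂̄) ∩ K^{p,q} = ∂∂̄ K^{p-1,q-1}` for every `(p,q)`. -/
def SatisfiesDdbarLemma : Prop :=
  ∀ p q : ℤ,
    LinearMap.ker D.d1 ⊓ LinearMap.ker D.d2 ⊓ (D.conjD p q ⊔ D.dolD p q) ⊓ D.K p q =
      D.bcD p q

end DoubleComplex

namespace DoubleComplex

variable {V : Type*} [AddCommGroup V] [Module ℂ V] (D : DoubleComplex V)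

lemma dolD_le_ker (p q : ℤ) : D.dolD p q ≤ LinearMap.ker D.d2 := by
  rintro x ⟨y, -, rfl⟩
  exact LinearMap.mem_ker.mpr (D.d2_d2_apply y)

lemma dolD_le_K (p q : ℤ) : D.dolD p q ≤ D.K p q := by
  rintro x ⟨y, hy, rfl⟩
  have h := D.d2_mem p (q - 1) y hy
  rwa [show q - 1 + 1 = q by ring] at h

lemma conjD_le_ker (p q : ℤ) : D.conjD p q ≤ LinearMap.ker D.d1 := by
  rintro x ⟨y, -, rfl⟩
  exact LinearMap.mem_ker.mpr (D.d1_d1_apply y)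

lemma conjD_le_K (p q : ℤ) : D.conjD p q ≤ D.K p q := by
  rintro x ⟨y, hy, rfl⟩
  have h := D.d1_mem (p - 1) q y hy
  rwa [show p - 1 + 1 = p by ring] at h

lemma ker_d2_le_ker_comp : LinearMap.ker D.d2 ≤ LinearMap.ker (D.d1 ∘ₗ D.d2) := by
  intro x hx
  have hx' : D.d2 x = 0 := hx
  simp only [LinearMap.mem_ker, LinearMap.comp_apply, hx', map_zero]

lemma ker_d1_le_ker_comp : LinearMap.ker D.d1 ≤ LinearMap.ker (D.d1 ∘ₗ D.d2) := by
  intro x hx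
  have hx' : D.d1 x = 0 := hx
  have h := D.anticomm_apply x
  rw [hx', map_zero, add_zero] at h
  exact LinearMap.mem_ker.mpr h

lemma bcD_le_dolD (p q : ℤ) : D.bcD p q ≤ D.dolD p q := by
  rintro x ⟨y, hy, rfl⟩
  refine ⟨-(D.d1 y), neg_mem ?_, ?_⟩
  · have h := D.d1_mem (p - 1) (q - 1) y hy
    rwa [show p - 1 + 1 = p by ring] at h
  · rw [map_neg, LinearMap.comp_apply]
    exact neg_eq_of_add_eq_zero_left (D.anticomm_apply y)

lemma bcD_le_conjD (p q : ℤ) : D.bcD p q ≤ D.conjD p q := by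
  rintro x ⟨y, hy, rfl⟩
  refine ⟨D.d2 y, ?_, rfl⟩
  have h := D.d2_mem (p - 1) (q - 1) y hy
  rwa [show q - 1 + 1 = q by ring] at h

end DoubleComplex

namespace DoubleComplex

variable {V : Type*} [AddCommGroup V] [Module ℂ V] (D : DoubleComplex V)

lemma bcN_le_dRN (k p : ℤ) : D.bcN p (k - p) ≤ D.dRN k := by
  rintro x ⟨⟨h1, h2⟩, hK⟩
  constructor
  · have h1' : D.d1 x = 0 := h1
    have h2' : D.d2 x = 0 := h2
    show D.dT x = 0
    simp [dT, LinearMap.add_apply, h1', h2']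
  · exact le_iSup (fun r => D.K r (k - r)) p hK

lemma bcD_le_dRD (k p : ℤ) : D.bcD p (k - p) ≤ D.dRD k := by
  rintro x ⟨y, hy, rfl⟩
  refine ⟨D.d2 y, ?_, ?_⟩
  · have h := D.d2_mem (p - 1) (k - p - 1) y hy
    rw [show k - p - 1 + 1 = k - p by ring] at h
    have hle : D.K (p - 1) (k - p) ≤ D.Tot (k - 1) := by
      have h2 := le_iSup (fun r => D.K r (k - 1 - r)) (p - 1)
      rwa [show k - 1 - (p - 1) = k - p by ring] at h2
    exact hle h
  · show D.dT (D.d2 y) = (D.d1 ∘ₗ D.d2) y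
    have h2 : D.d2 (D.d2 y) = 0 := D.d2_d2_apply y
    simp [dT, LinearMap.add_apply, LinearMap.comp_apply, h2]

open DirectSum in
/-- The natural map `⊕_{p+q=k} H_BC^{p,q} → H_dR^k`. -/
noncomputable def bcToDR (k : ℤ) :
    (⨁ p : ℤ, ↥(D.bcN p (k - p)) ⧸ (D.bcD p (k - p)).comap (D.bcN p (k - p)).subtype)
      →ₗ[ℂ] (↥(D.dRN k) ⧸ (D.dRD k).comap (D.dRN k).subtype) :=
  DirectSum.toModule ℂ ℤ _ fun p => quotMap (D.bcN_le_dRN k p) (D.bcD_le_dRD k p)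

end DoubleComplex

namespace DoubleComplex

variable {V : Type*} [AddCommGroup V] [Module ℂ V] (D : DoubleComplex V)

/-- The natural map `H_BC^{p,q} → H_A^{p,q}` induced by the identity. -/
def mapBCAe (p q : ℤ) :
    (↥(D.bcN p q) ⧸ (D.bcD p q).comap (D.bcN p q).subtype) →ₗ[ℂ]
    (↥(D.aeN p q) ⧸ (D.aeD p q).comap (D.aeN p q).subtype) :=
  quotMap (le_inf (inf_le_left.trans (inf_le_right.trans D.ker_d2_le_ker_comp)) inf_le_right)
    ((D.bcD_le_conjD p q).trans le_sup_left)

/-- The natural map `H_BC^{p,q} → H_∂̄^{p,q}` induced by the identity. -/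
def mapBCDol (p q : ℤ) :
    (↥(D.bcN p q) ⧸ (D.bcD p q).comap (D.bcN p q).subtype) →ₗ[ℂ]
    (↥(D.dolN p q) ⧸ (D.dolD p q).comap (D.dolN p q).subtype) :=
  quotMap (le_inf (inf_le_left.trans inf_le_right) inf_le_right) (D.bcD_le_dolD p q)

/-- The natural map `H_BC^{p,q} → H_∂^{p,q}` induced by the identity. -/
def mapBCConj (p q : ℤ) :
    (↥(D.bcN p q) ⧸ (D.bcD p q).comap (D.bcN p q).subtype) →ₗ[ℂ]
    (↥(D.conjN p q) ⧸ (D.conjD p q).comap (D.conjN p q).subtype) :=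
  quotMap (le_inf (inf_le_left.trans inf_le_left) inf_le_right) (D.bcD_le_conjD p q)

/-- The natural map `H_∂̄^{p,q} → H_A^{p,q}` induced by the identity. -/
def mapDolAe (p q : ℤ) :
    (↥(D.dolN p q) ⧸ (D.dolD p q).comap (D.dolN p q).subtype) →ₗ[ℂ]
    (↥(D.aeN p q) ⧸ (D.aeD p q).comap (D.aeN p q).subtype) :=
  quotMap (inf_le_inf_right (D.K p q) D.ker_d2_le_ker_comp) le_sup_right

/-- The natural map `H_∂^{p,q} → H_A^{p,q}` induced by the identity. -/
def mapConjAe (p q : ℤ) :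
    (↥(D.conjN p q) ⧸ (D.conjD p q).comap (D.conjN p q).subtype) →ₗ[ℂ]
    (↥(D.aeN p q) ⧸ (D.aeD p q).comap (D.aeN p q).subtype) :=
  quotMap (inf_le_inf_right (D.K p q) D.ker_d1_le_ker_comp) le_sup_left

end DoubleComplex

/-!
The `∂∂̄`-lemma says `bcN ⊓ aeD ≤ bcD`, that is, `H_BC → H_A` is injective. Applied to `∂x` for a
`∂∂̄`-closed `x` it gives `∂x = ∂∂̄y`, so `x` is `∂`-closed modulo `im ∂̄`, and symmetrically with
`∂` and `∂̄` exchanged; the statements on `H_∂̄` and `H_∂` follow by the modular law. For de Rham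
cohomology, the bihomogeneous components of a `d`-closed element are `∂∂̄`-closed, and `∂̄y ≡ -∂y`
modulo `im d`, so every class has a representative killed by `∂`, hence also by `∂̄`; this is
surjectivity. Taking components defines maps `H_dR → H_A`, and composing `⊕ H_BC → H_dR` with them
gives the maps `H_BC → H_A`; this is injectivity.
-/

section QuotMap

variable {V : Type*} [AddCommGroup V] [Module ℂ V] {M₁ N₁ M₂ N₂ : Submodule ℂ V}

lemma mk_eq_mk_comap_subtype_iff {x y : V} (hx : x ∈ M₁) (hy : y ∈ M₁) :
    (Submodule.Quotient.mk ⟨x, hx⟩ : ↥M₁ ⧸ N₁.comap M₁.subtype) = Submodule.Quotient.mk ⟨y, hy⟩ ↔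
      x - y ∈ N₁ :=
  Submodule.Quotient.eq _

lemma quotMap_mk (hM : M₁ ≤ M₂) (hN : N₁ ≤ N₂) {x : V} (hx : x ∈ M₁) :
    quotMap hM hN (Submodule.Quotient.mk ⟨x, hx⟩) = Submodule.Quotient.mk ⟨x, hM hx⟩ :=
  rfl

lemma quotMap_injective_iff (hM : M₁ ≤ M₂) (hN : N₁ ≤ N₂) :
    Function.Injective (quotMap hM hN) ↔ M₁ ⊓ N₂ ≤ N₁ := by
  rw [← LinearMap.ker_eq_bot, quotMap, ker_mapQ, ← le_bot_iff, map_le_iff_le_comap, comap_bot,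
    ker_mkQ, ← comap_comp, subtype_comp_inclusion, ← map_le_iff_le_comap, map_comap_subtype]

lemma quotMap_surjective_iff (hM : M₁ ≤ M₂) (hN : N₁ ≤ N₂) :
    Function.Surjective (quotMap hM hN) ↔ M₂ ≤ M₁ ⊔ N₂ := by
  constructor
  · intro hsurj x hx
    obtain ⟨a, ha⟩ := hsurj (Submodule.Quotient.mk ⟨x, hx⟩)
    obtain ⟨⟨y, hy⟩, rfl⟩ := Submodule.Quotient.mk_surjective _ a
    rw [quotMap_mk, eq_comm, mk_eq_mk_comap_subtype_iff] at ha
    exact mem_sup.mpr ⟨y, hy, x - y, ha, add_sub_cancel _ _⟩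
  · intro hle a
    obtain ⟨⟨x, hx⟩, rfl⟩ := Submodule.Quotient.mk_surjective _ a
    obtain ⟨y, hy, n, hn, hyn⟩ := mem_sup.mp (hle hx)
    refine ⟨Submodule.Quotient.mk ⟨y, hy⟩, ?_⟩
    rwa [quotMap_mk, eq_comm, mk_eq_mk_comap_subtype_iff, ← hyn, add_sub_cancel_left]

lemma quotMap_bijective_iff (hM : M₁ ≤ M₂) (hN : N₁ ≤ N₂) :
    Function.Bijective (quotMap hM hN) ↔ M₁ ⊓ N₂ ≤ N₁ ∧ M₂ ≤ M₁ ⊔ N₂ :=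
  and_congr (quotMap_injective_iff hM hN) (quotMap_surjective_iff hM hN)

lemma toModule_quotMap_surjective {ι : Type*} [DecidableEq ι] {M N : ι → Submodule ℂ V}
    {M' N' : Submodule ℂ V} (hM : ∀ i, M i ≤ M') (hN : ∀ i, N i ≤ N')
    (hle : M' ≤ (⨆ i, M i) ⊔ N') :
    Function.Surjective (DirectSum.toModule ℂ ι _ fun i ↦ quotMap (hM i) (hN i)) := by
  have mk_mem_range : ∀ y (hy : y ∈ ⨆ i, M i), Submodule.Quotient.mk ⟨y, iSup_le hM hy⟩ ∈
      LinearMap.range (DirectSum.toModule ℂ ι _ fun i ↦ quotMap (hM i) (hN i)) := by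
    intro y hy
    induction hy using iSup_induction' with
    | mem i y hy =>
      exact ⟨DirectSum.lof ℂ ι _ i (Submodule.Quotient.mk ⟨y, hy⟩), DirectSum.toModule_lof ..⟩
    | zero => exact zero_mem _
    | add y z _ _ hy hz => exact add_mem hy hz
  intro a
  obtain ⟨⟨x, hx⟩, rfl⟩ := Submodule.Quotient.mk_surjective _ a
  obtain ⟨y, hy, n, hn, hyn⟩ := mem_sup.mp (hle hx)
  obtain ⟨w, hw⟩ := mk_mem_range y hy
  refine ⟨w, hw.trans ?_⟩
  rwa [eq_comm, mk_eq_mk_comap_subtype_iff, ← hyn, add_sub_cancel_left]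

end QuotMap

lemma toModule_injective_of_comp {R ι N : Type*} [Semiring R] [DecidableEq ι]
    {M P : ι → Type*} [∀ i, AddCommMonoid (M i)] [∀ i, Module R (M i)]
    [AddCommMonoid N] [Module R N] [∀ i, AddCommMonoid (P i)] [∀ i, Module R (P i)]
    (f : ∀ i, M i →ₗ[R] N) (g : ∀ i, N →ₗ[R] P i)
    (hinj : ∀ i, Function.Injective (g i ∘ₗ f i)) (hzero : ∀ i j, i ≠ j → g j ∘ₗ f i = 0) :
    Function.Injective (DirectSum.toModule R ι N f) := by
  have comp_toModule (j : ι) : g j ∘ₗ DirectSum.toModule R ι N f =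
      (g j ∘ₗ f j) ∘ₗ DirectSum.component R ι M j := by
    ext i x
    rcases eq_or_ne i j with rfl | hij
    · simp
    · simpa [DirectSum.component.of, hij] using LinearMap.congr_fun (hzero i j hij) x
  intro v w hvw
  refine DFinsupp.ext fun j ↦ hinj j ?_
  have hv := LinearMap.congr_fun (comp_toModule j) v
  have hw := LinearMap.congr_fun (comp_toModule j) w
  exact hv.symm.trans ((congrArg (g j) hvw).trans hw)

lemma coe_decompose_map_of_injective {ι κ R M N : Type*} [DecidableEq ι] [DecidableEq κ]
    [Semiring R] [AddCommMonoid M] [Module R M] [AddCommMonoid N] [Module R N]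
    (ℳ : ι → Submodule R M) (𝒩 : κ → Submodule R N)
    [DirectSum.Decomposition ℳ] [DirectSum.Decomposition 𝒩] (f : M →ₗ[R] N) {s : ι → κ}
    (hs : Function.Injective s) (hf : ∀ i, ∀ x ∈ ℳ i, f x ∈ 𝒩 (s i)) (i : ι) (x : M) :
    (DirectSum.decompose 𝒩 (f x) (s i) : N) = f (DirectSum.decompose ℳ x i) := by
  induction x using DirectSum.Decomposition.inductionOn ℳ with
  | zero => simp
  | @homogeneous j x =>
    rcases eq_or_ne j i with rfl | hij
    · rw [DirectSum.decompose_of_mem_same 𝒩 (hf j x x.2),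
        DirectSum.decompose_of_mem_same ℳ x.2]
    · rw [DirectSum.decompose_of_mem_ne 𝒩 (hf j x x.2) (hs.ne hij),
        DirectSum.decompose_of_mem_ne ℳ x.2 hij, map_zero]
  | add x y hx hy => simp [hx, hy]

namespace DoubleComplex

variable {V : Type*} [AddCommGroup V] [Module ℂ V] (D : DoubleComplex V)

section Components

noncomputable instance : DirectSum.Decomposition fun pq : ℤ × ℤ ↦ D.K pq.1 pq.2 :=
  D.isInternal.chooseDecomposition

/-- The component of bidegree `(p, q)`, as an endomorphism of the ambient space `V`. -/
noncomputable def proj (p q : ℤ) : V →ₗ[ℂ] V :=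
  (D.K p q).subtype ∘ₗ DirectSum.component ℂ (ℤ × ℤ) (fun pq ↦ D.K pq.1 pq.2) (p, q) ∘ₗ
    (DirectSum.decomposeLinearEquiv fun pq : ℤ × ℤ ↦ D.K pq.1 pq.2).toLinearMap

lemma proj_mem (p q : ℤ) (x : V) : D.proj p q x ∈ D.K p q :=
  SetLike.coe_mem _

variable {D}

lemma proj_of_mem_same {p q : ℤ} {x : V} (hx : x ∈ D.K p q) : D.proj p q x = x :=
  DirectSum.decompose_of_mem_same (fun pq : ℤ × ℤ ↦ D.K pq.1 pq.2) (i := (p, q)) hx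

lemma proj_of_mem_ne {p q r s : ℤ} {x : V} (hx : x ∈ D.K p q) (hne : (p, q) ≠ (r, s)) :
    D.proj r s x = 0 :=
  DirectSum.decompose_of_mem_ne (fun pq : ℤ × ℤ ↦ D.K pq.1 pq.2) (i := (p, q)) hx hne

lemma mem_of_forall_proj_mem {N : Submodule ℂ V} {x : V} (hx : ∀ p q, D.proj p q x ∈ N) :
    x ∈ N := by
  classical
  rw [← DirectSum.sum_support_decompose (fun pq : ℤ × ℤ ↦ D.K pq.1 pq.2) x]
  exact sum_mem fun pq _ ↦ hx pq.1 pq.2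

lemma proj_eq_zero_of_mem_Tot {k p q : ℤ} (hpq : p + q ≠ k) {x : V} (hx : x ∈ D.Tot k) :
    D.proj p q x = 0 := by
  induction hx using iSup_induction' with
  | mem r x hx => exact proj_of_mem_ne hx (by rw [Ne, Prod.mk.injEq]; omega)
  | zero => exact map_zero _
  | add x y _ _ hx hy => rw [map_add, hx, hy, add_zero]

lemma mem_of_mem_Tot_of_forall_proj_mem {k : ℤ} {N : Submodule ℂ V} {x : V} (hx : x ∈ D.Tot k)
    (hN : ∀ p, D.proj p (k - p) x ∈ N) : x ∈ N := by
  refine mem_of_forall_proj_mem (D := D) fun p q ↦ ?_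
  by_cases hpq : p + q = k
  · obtain rfl : q = k - p := by omega
    exact hN p
  · rw [proj_eq_zero_of_mem_Tot hpq hx]
    exact zero_mem N

variable (D)

lemma proj_d1 (p q : ℤ) (x : V) : D.proj p q (D.d1 x) = D.d1 (D.proj (p - 1) q x) := by
  have hs : Function.Injective fun pq : ℤ × ℤ ↦ (pq.1 + 1, pq.2) := fun a b h ↦ by
    simpa [Prod.ext_iff] using h
  obtain ⟨r, rfl⟩ : ∃ r, p = r + 1 := ⟨p - 1, by ring⟩
  rw [add_sub_cancel_right]
  exact coe_decompose_map_of_injective (fun pq : ℤ × ℤ ↦ D.K pq.1 pq.2)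
    (fun pq : ℤ × ℤ ↦ D.K pq.1 pq.2) D.d1 hs (fun pq ↦ D.d1_mem pq.1 pq.2) (r, q) x

lemma proj_d2 (p q : ℤ) (x : V) : D.proj p q (D.d2 x) = D.d2 (D.proj p (q - 1) x) := by
  have hs : Function.Injective fun pq : ℤ × ℤ ↦ (pq.1, pq.2 + 1) := fun a b h ↦ by
    simpa [Prod.ext_iff] using h
  obtain ⟨r, rfl⟩ : ∃ r, q = r + 1 := ⟨q - 1, by ring⟩
  rw [add_sub_cancel_right]
  exact coe_decompose_map_of_injective (fun pq : ℤ × ℤ ↦ D.K pq.1 pq.2)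
    (fun pq : ℤ × ℤ ↦ D.K pq.1 pq.2) D.d2 hs (fun pq ↦ D.d2_mem pq.1 pq.2) (p, r) x

lemma proj_dT (p q : ℤ) (x : V) :
    D.proj p q (D.dT x) = D.d1 (D.proj (p - 1) q x) + D.d2 (D.proj p (q - 1) x) := by
  rw [dT, LinearMap.add_apply, map_add, proj_d1, proj_d2]

end Components

section Inclusions

variable (p q k : ℤ)

lemma conjN_inf_dolN : D.conjN p q ⊓ D.dolN p q = D.bcN p q :=
  (inf_inf_distrib_right _ _ _).symm

lemma conjD_le_conjN : D.conjD p q ≤ D.conjN p q :=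
  le_inf (D.conjD_le_ker p q) (D.conjD_le_K p q)

lemma dolD_le_dolN : D.dolD p q ≤ D.dolN p q :=
  le_inf (D.dolD_le_ker p q) (D.dolD_le_K p q)

lemma conjN_le_aeN : D.conjN p q ≤ D.aeN p q :=
  inf_le_inf_right _ D.ker_d1_le_ker_comp

lemma dolN_le_aeN : D.dolN p q ≤ D.aeN p q :=
  inf_le_inf_right _ D.ker_d2_le_ker_comp

lemma conjD_le_aeD : D.conjD p q ≤ D.aeD p q :=
  le_sup_left

lemma dolD_le_aeD : D.dolD p q ≤ D.aeD p q :=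
  le_sup_right

lemma bcD_le_bcN : D.bcD p q ≤ D.bcN p q :=
  (le_inf ((D.bcD_le_conjD p q).trans (D.conjD_le_conjN p q))
    ((D.bcD_le_dolD p q).trans (D.dolD_le_dolN p q))).trans (D.conjN_inf_dolN p q).le

variable {p q k} in
lemma K_le_Tot (hpq : p + q = k) : D.K p q ≤ D.Tot k := by
  obtain rfl : q = k - p := by omega
  exact le_iSup (fun r ↦ D.K r (k - r)) p

lemma dRD_le_ker_dT : D.dRD k ≤ LinearMap.ker D.dT := by
  rintro _ ⟨x, -, rfl⟩
  rw [LinearMap.mem_ker]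
  simp only [dT, LinearMap.add_apply, map_add, d1_d1_apply, d2_d2_apply, zero_add, add_zero]
  exact (add_comm _ _).trans (D.anticomm_apply x)

variable {D} in
lemma proj_mem_aeN {x : V} (hx : D.dT x = 0) : D.proj p q x ∈ D.aeN p q := by
  refine ⟨?_, D.proj_mem p q x⟩
  have hd : D.d1 (D.proj (p - 1) (q + 1) x) + D.d2 (D.proj p q x) = 0 := by
    simpa [hx] using (D.proj_dT p (q + 1) x).symm
  simpa [d1_d1_apply] using congrArg D.d1 hd

lemma proj_dT_mem_aeD (x : V) : D.proj p q (D.dT x) ∈ D.aeD p q := by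
  rw [proj_dT]
  exact add_mem_sup (mem_map_of_mem (D.proj_mem _ _ x)) (mem_map_of_mem (D.proj_mem _ _ x))

lemma dolD_le_ker_d1_inf_Tot_sup_dRD :
    D.dolD p (k - p) ≤ LinearMap.ker D.d1 ⊓ D.Tot k ⊔ D.dRD k := by
  rintro _ ⟨y, hy, rfl⟩
  have hdy : D.dT y ∈ D.dRD k := mem_map_of_mem (D.K_le_Tot (by ring) hy)
  have hd1y : D.d1 y ∈ LinearMap.ker D.d1 ⊓ D.Tot k :=
    ⟨D.d1_d1_apply y, D.K_le_Tot (by ring) (D.d1_mem _ _ y hy)⟩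
  exact mem_sup.mpr ⟨-D.d1 y, neg_mem hd1y, D.dT y, hdy, by simp [dT]⟩

lemma ker_d1_inf_dRN_le_iSup_bcN : LinearMap.ker D.d1 ⊓ D.dRN k ≤ ⨆ p, D.bcN p (k - p) := by
  rintro x ⟨h1 : D.d1 x = 0, hd : D.d1 x + D.d2 x = 0, hx⟩
  have h2 : D.d2 x = 0 := by rwa [h1, zero_add] at hd
  refine mem_of_mem_Tot_of_forall_proj_mem hx fun p ↦ mem_iSup_of_mem p ⟨⟨?_, ?_⟩, D.proj_mem ..⟩
  · simpa [h1] using (D.proj_d1 (p + 1) (k - p) x).symm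
  · simpa [h2] using (D.proj_d2 p (k - p + 1) x).symm

end Inclusions

/-- The map `H_dR^k → H_A^{p,k-p}` sending the class of a `d`-closed element to that of its
component of bidegree `(p, k - p)`. -/
noncomputable def dRToAe (k p : ℤ) :
    (↥(D.dRN k) ⧸ (D.dRD k).comap (D.dRN k).subtype) →ₗ[ℂ]
      (↥(D.aeN p (k - p)) ⧸ (D.aeD p (k - p)).comap (D.aeN p (k - p)).subtype) :=
  mapQ _ _ ((D.proj p (k - p)).restrict fun _ hx ↦ proj_mem_aeN p (k - p) hx.1) <| by
    rintro ⟨_, _⟩ ⟨y, -, rfl⟩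
    exact D.proj_dT_mem_aeD p (k - p) y

lemma dRToAe_comp_quotMap_same (k p : ℤ) :
    D.dRToAe k p ∘ₗ quotMap (D.bcN_le_dRN k p) (D.bcD_le_dRD k p) = D.mapBCAe p (k - p) := by
  ext ⟨x, hx⟩
  exact congrArg Submodule.Quotient.mk (Subtype.ext (proj_of_mem_same hx.2))

lemma dRToAe_comp_quotMap_of_ne (k : ℤ) {p r : ℤ} (hne : p ≠ r) :
    D.dRToAe k r ∘ₗ quotMap (D.bcN_le_dRN k p) (D.bcD_le_dRD k p) = 0 := by
  ext ⟨x, hx⟩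
  exact congrArg Submodule.Quotient.mk
    (Subtype.ext (proj_of_mem_ne hx.2 (ne_of_apply_ne Prod.fst hne)))

lemma satisfiesDdbarLemma_iff_bcN_inf_aeD_le :
    D.SatisfiesDdbarLemma ↔ ∀ p q, D.bcN p q ⊓ D.aeD p q ≤ D.bcD p q := by
  refine forall₂_congr fun p q ↦ ?_
  rw [inf_right_comm]
  exact ⟨le_of_eq, fun hle ↦ hle.antisymm <|
    le_inf (D.bcD_le_bcN p q) ((D.bcD_le_conjD p q).trans (D.conjD_le_aeD p q))⟩

lemma satisfiesDdbarLemma_iff_mapBCAe_injective :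
    D.SatisfiesDdbarLemma ↔ ∀ p q, Function.Injective (D.mapBCAe p q) :=
  D.satisfiesDdbarLemma_iff_bcN_inf_aeD_le.trans
    (forall₂_congr fun _ _ ↦ (quotMap_injective_iff _ _).symm)

namespace SatisfiesDdbarLemma

variable {D} (h : D.SatisfiesDdbarLemma) (p q k : ℤ)
include h

lemma bcN_inf_aeD_le : D.bcN p q ⊓ D.aeD p q ≤ D.bcD p q :=
  D.satisfiesDdbarLemma_iff_bcN_inf_aeD_le.mp h p q

lemma conjD_inf_dolN_le : D.conjD p q ⊓ D.dolN p q ≤ D.bcD p q := by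
  refine le_trans (le_inf ?_ (inf_le_left.trans (D.conjD_le_aeD p q))) (h.bcN_inf_aeD_le p q)
  exact (inf_le_inf_right _ (D.conjD_le_conjN p q)).trans (D.conjN_inf_dolN p q).le

lemma conjN_inf_dolD_le : D.conjN p q ⊓ D.dolD p q ≤ D.bcD p q := by
  refine le_trans (le_inf ?_ (inf_le_right.trans (D.dolD_le_aeD p q))) (h.bcN_inf_aeD_le p q)
  exact (inf_le_inf_left _ (D.dolD_le_dolN p q)).trans (D.conjN_inf_dolN p q).le

lemma aeN_le_conjN_sup_dolD : D.aeN p q ≤ D.conjN p q ⊔ D.dolD p q := by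
  rintro x ⟨hdd : D.d1 (D.d2 x) = 0, hx⟩
  have hd1x : D.d1 x ∈ D.conjD (p + 1) q ⊓ D.dolN (p + 1) q := by
    refine ⟨mem_map_of_mem (by simpa using hx), ?_, D.d1_mem p q x hx⟩
    simpa [hdd] using D.anticomm_apply x
  obtain ⟨y, hy, hyx : D.d1 (D.d2 y) = D.d1 x⟩ := h.conjD_inf_dolN_le (p + 1) q hd1x
  have hd2y : D.d2 y ∈ D.dolD p q := mem_map_of_mem (by simpa using hy)
  have hsub : x - D.d2 y ∈ D.conjN p q :=
    ⟨by simp [hyx], sub_mem hx (D.dolD_le_K p q hd2y)⟩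
  exact mem_sup.mpr ⟨x - D.d2 y, hsub, D.d2 y, hd2y, sub_add_cancel _ _⟩

lemma aeN_le_dolN_sup_conjD : D.aeN p q ≤ D.dolN p q ⊔ D.conjD p q := by
  rintro x ⟨hdd : D.d1 (D.d2 x) = 0, hx⟩
  have hd2x : D.d2 x ∈ D.conjN p (q + 1) ⊓ D.dolD p (q + 1) :=
    ⟨⟨hdd, D.d2_mem p q x hx⟩, mem_map_of_mem (by simpa using hx)⟩
  obtain ⟨y, hy, hyx : D.d1 (D.d2 y) = D.d2 x⟩ := h.conjN_inf_dolD_le p (q + 1) hd2x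
  have hd1y : D.d1 y ∈ D.conjD p q := mem_map_of_mem (by simpa using hy)
  have hadd : x + D.d1 y ∈ D.dolN p q := by
    refine ⟨?_, add_mem hx (D.conjD_le_K p q hd1y)⟩
    change D.d2 (x + D.d1 y) = 0
    rw [map_add, ← hyx, anticomm_apply]
  exact mem_sup.mpr ⟨x + D.d1 y, hadd, -D.d1 y, neg_mem hd1y, add_neg_cancel_right _ _⟩

lemma dolN_le_bcN_sup_dolD : D.dolN p q ≤ D.bcN p q ⊔ D.dolD p q :=
  calc D.dolN p q
    _ ≤ (D.dolD p q ⊔ D.conjN p q) ⊓ D.dolN p q :=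
      le_inf ((D.dolN_le_aeN p q).trans <| (h.aeN_le_conjN_sup_dolD p q).trans_eq
        (sup_comm _ _)) le_rfl
    _ = D.dolD p q ⊔ D.conjN p q ⊓ D.dolN p q := sup_inf_assoc_of_le _ (D.dolD_le_dolN p q)
    _ = D.bcN p q ⊔ D.dolD p q := by rw [conjN_inf_dolN, sup_comm]

lemma conjN_le_bcN_sup_conjD : D.conjN p q ≤ D.bcN p q ⊔ D.conjD p q :=
  calc D.conjN p q
    _ ≤ (D.conjD p q ⊔ D.dolN p q) ⊓ D.conjN p q :=
      le_inf ((D.conjN_le_aeN p q).trans <| (h.aeN_le_dolN_sup_conjD p q).trans_eq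
        (sup_comm _ _)) le_rfl
    _ = D.conjD p q ⊔ D.dolN p q ⊓ D.conjN p q := sup_inf_assoc_of_le _ (D.conjD_le_conjN p q)
    _ = D.bcN p q ⊔ D.conjD p q := by rw [inf_comm, conjN_inf_dolN, sup_comm]

lemma dolN_inf_aeD_le_dolD : D.dolN p q ⊓ D.aeD p q ≤ D.dolD p q :=
  calc D.dolN p q ⊓ D.aeD p q
    _ = (D.dolD p q ⊔ D.conjD p q) ⊓ D.dolN p q := by rw [inf_comm, sup_comm]; rfl
    _ = D.dolD p q ⊔ D.conjD p q ⊓ D.dolN p q := sup_inf_assoc_of_le _ (D.dolD_le_dolN p q)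
    _ ≤ D.dolD p q := sup_le le_rfl ((h.conjD_inf_dolN_le p q).trans (D.bcD_le_dolD p q))

lemma conjN_inf_aeD_le_conjD : D.conjN p q ⊓ D.aeD p q ≤ D.conjD p q :=
  calc D.conjN p q ⊓ D.aeD p q
    _ = (D.conjD p q ⊔ D.dolD p q) ⊓ D.conjN p q := inf_comm _ _
    _ = D.conjD p q ⊔ D.dolD p q ⊓ D.conjN p q := sup_inf_assoc_of_le _ (D.conjD_le_conjN p q)
    _ ≤ D.conjD p q := sup_le le_rfl <|
      (inf_comm _ _).trans_le ((h.conjN_inf_dolD_le p q).trans (D.bcD_le_conjD p q))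

lemma dRN_le_iSup_bcN_sup_dRD : D.dRN k ≤ (⨆ p, D.bcN p (k - p)) ⊔ D.dRD k := by
  have hle : D.dRN k ≤ LinearMap.ker D.d1 ⊓ D.Tot k ⊔ D.dRD k := by
    rintro x ⟨hd, hx⟩
    refine mem_of_mem_Tot_of_forall_proj_mem hx fun p ↦ ?_
    have hconj : D.conjN p (k - p) ≤ LinearMap.ker D.d1 ⊓ D.Tot k :=
      inf_le_inf_left _ (D.K_le_Tot (by ring))
    exact sup_le (hconj.trans le_sup_left) (D.dolD_le_ker_d1_inf_Tot_sup_dRD p k)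
      (h.aeN_le_conjN_sup_dolD p (k - p) (proj_mem_aeN p (k - p) hd))
  calc D.dRN k
    _ ≤ (D.dRD k ⊔ LinearMap.ker D.d1 ⊓ D.Tot k) ⊓ LinearMap.ker D.dT :=
      le_inf (hle.trans_eq (sup_comm _ _)) inf_le_left
    _ = D.dRD k ⊔ LinearMap.ker D.d1 ⊓ D.Tot k ⊓ LinearMap.ker D.dT :=
      sup_inf_assoc_of_le _ (D.dRD_le_ker_dT k)
    _ = LinearMap.ker D.d1 ⊓ D.dRN k ⊔ D.dRD k := by
      rw [inf_assoc, inf_comm (D.Tot k), sup_comm]; rfl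
    _ ≤ (⨆ p, D.bcN p (k - p)) ⊔ D.dRD k := sup_le_sup_right (D.ker_d1_inf_dRN_le_iSup_bcN k) _

lemma mapBCDol_bijective : Function.Bijective (D.mapBCDol p q) :=
  (quotMap_bijective_iff _ _).mpr
    ⟨(inf_le_inf_left _ (D.dolD_le_aeD p q)).trans (h.bcN_inf_aeD_le p q),
      h.dolN_le_bcN_sup_dolD p q⟩

lemma mapBCConj_bijective : Function.Bijective (D.mapBCConj p q) :=
  (quotMap_bijective_iff _ _).mpr
    ⟨(inf_le_inf_left _ (D.conjD_le_aeD p q)).trans (h.bcN_inf_aeD_le p q),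
      h.conjN_le_bcN_sup_conjD p q⟩

lemma mapDolAe_bijective : Function.Bijective (D.mapDolAe p q) :=
  (quotMap_bijective_iff _ _).mpr
    ⟨h.dolN_inf_aeD_le_dolD p q,
      (h.aeN_le_dolN_sup_conjD p q).trans (sup_le_sup_left (D.conjD_le_aeD p q) _)⟩

lemma mapConjAe_bijective : Function.Bijective (D.mapConjAe p q) :=
  (quotMap_bijective_iff _ _).mpr
    ⟨h.conjN_inf_aeD_le_conjD p q,
      (h.aeN_le_conjN_sup_dolD p q).trans (sup_le_sup_left (D.dolD_le_aeD p q) _)⟩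

lemma bcToDR_injective : Function.Injective (D.bcToDR k) := by
  refine toModule_injective_of_comp _ (D.dRToAe k) (fun p ↦ ?_)
    fun p r hne ↦ D.dRToAe_comp_quotMap_of_ne k hne
  rw [dRToAe_comp_quotMap_same]
  exact D.satisfiesDdbarLemma_iff_mapBCAe_injective.mp h p (k - p)

lemma bcToDR_bijective : Function.Bijective (D.bcToDR k) :=
  ⟨h.bcToDR_injective k, toModule_quotMap_surjective _ _ (h.dRN_le_iSup_bcN_sup_dRD k)⟩

end SatisfiesDdbarLemma

end DoubleComplex

theorem ddbar_lemma_characterization_general {V : Type*} [AddCommGroup V] [Module ℂ V]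
    (D : DoubleComplex V) :
    (D.SatisfiesDdbarLemma ↔ ∀ p q : ℤ, Function.Injective (D.mapBCAe p q)) ∧
    (D.SatisfiesDdbarLemma →
      (∀ p q : ℤ,
        Function.Bijective (D.mapBCDol p q) ∧ Function.Bijective (D.mapBCConj p q) ∧
        Function.Bijective (D.mapDolAe p q) ∧ Function.Bijective (D.mapConjAe p q)) ∧
      ∀ k : ℤ, Function.Bijective (D.bcToDR k)) :=
  ⟨D.satisfiesDdbarLemma_iff_mapBCAe_injective, fun h ↦
    ⟨fun p q ↦ ⟨h.mapBCDol_bijective p q, h.mapBCConj_bijective p q,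
      h.mapDolAe_bijective p q, h.mapConjAe_bijective p q⟩, h.bcToDR_bijective⟩⟩

open DoubleComplex in
/-- For a bounded double complex of complex vector spaces: the `∂∂̄`-lemma holds if and
only if the natural map `H_BC^{p,q} → H_A^{p,q}` is injective for every `(p,q)`; and
when it holds, all the natural identity-induced maps `H_BC → H_∂̄`, `H_BC → H_∂`,
`H_∂̄ → H_A`, `H_∂ → H_A` are isomorphisms, and the natural map
`⊕_{p+q=k} H_BC^{p,q} → H_dR^k` is an isomorphism for every `k`. -/
theorem ddbar_lemma_characterization {V : Type*} [AddCommGroup V] [Module ℂ V]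
    (D : DoubleComplex V) (hb : D.Bounded) :
    (D.SatisfiesDdbarLemma ↔ ∀ p q : ℤ, Function.Injective (D.mapBCAe p q)) ∧
    (D.SatisfiesDdbarLemma →
      (∀ p q : ℤ,
        Function.Bijective (D.mapBCDol p q) ∧ Function.Bijective (D.mapBCConj p q) ∧
        Function.Bijective (D.mapDolAe p q) ∧ Function.Bijective (D.mapConjAe p q)) ∧
      ∀ k : ℤ, Function.Bijective (D.bcToDR k)) := by
  exact ddbar_lemma_characterization_general D
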